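/- Under value invisibility, the LSTS underlying a Petri net is labelled consistently for polynomial propositions: for all paths π, π' starting in a common marking, if π and π' are weakly equivalent with respect to the set of value invisible structural transitions, then π and π' are stutter equivalent under the labelling L_p by polynomial propositions. -/

import Mathlib

open scoped Classical

/-- The subsequence of an `Option`-valued sequence consisting of the values at the
indices satisfying `P`, in increasing order (`none` past the end when only finitely
many indices satisfy `P`). -/
noncomputable def subseq {α : Type*} (g : ℕ → Option α) (P : ℕ → Prop) : ℕ → Option α :=
  fun k => if {i | P i}.Infinite ∨ k < {i | P i}.ncard then g (Nat.nth P k) else none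

/-- The no-stutter trace of a sequence of labels (`none` marking positions past the end
of a finite sequence): the subsequence of those values at indices `i` such that `i = 0`
or the value differs from the one at `i - 1`. -/
noncomputable def nsTrace {α : Type*} (g : ℕ → Option α) : ℕ → Option α :=
  subseq g fun i => (g i).isSome ∧ (i = 0 ∨ g i ≠ g (i - 1))

/-- A (finite or infinite) path of a transition relation `Tr`.  `len` is the number of
transitions (`⊤` for an infinite path); the values of `states` and `acts` beyond the
length are irrelevant junk. -/
structure TPath {S : Type*} {A : Type*} (Tr : S → A → S → Prop) where
  states : ℕ → S
  acts : ℕ → A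
  len : ℕ∞
  valid : ∀ i : ℕ, (i : ℕ∞) < len → Tr (states i) (acts i) (states (i + 1))

/-- The sequence of state labels along a path (`none` beyond the end). -/
noncomputable def TPath.labelSeq {S A l : Type*}
    {Tr : S → A → S → Prop} (p : TPath Tr) (L : S → Set l) : ℕ → Option (Set l) :=
  fun i => if (i : ℕ∞) ≤ p.len then some (L (p.states i)) else none

/-- The sequence of actions along a path (`none` beyond the end). -/
noncomputable def TPath.actSeq {S A : Type*}
    {Tr : S → A → S → Prop} (p : TPath Tr) : ℕ → Option A :=
  fun i => if (i : ℕ∞) < p.len then some (p.acts i) else none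

/-- Stutter equivalence of two paths with respect to labellings `L₁`, `L₂`:
both are finite or both are infinite, and they have the same no-stutter trace. -/
def StutterEquiv {S₁ A₁ S₂ A₂ l : Type*}
    {Tr₁ : S₁ → A₁ → S₁ → Prop} {Tr₂ : S₂ → A₂ → S₂ → Prop}
    (L₁ : S₁ → Set l) (L₂ : S₂ → Set l) (p : TPath Tr₁) (q : TPath Tr₂) : Prop :=
  (p.len = ⊤ ↔ q.len = ⊤) ∧ nsTrace (p.labelSeq L₁) = nsTrace (q.labelSeq L₂)

/-- Weak equivalence of two paths with respect to a set `I` of invisible actions: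
both are finite or both are infinite, and the projections of their action sequences
onto the visible actions (those not in `I`) are equal. -/
def WeakEquiv {S₁ S₂ A : Type*}
    {Tr₁ : S₁ → A → S₁ → Prop} {Tr₂ : S₂ → A → S₂ → Prop}
    (I : Set A) (p : TPath Tr₁) (q : TPath Tr₂) : Prop :=
  (p.len = ⊤ ↔ q.len = ⊤) ∧
    subseq p.actSeq (fun i => (i : ℕ∞) < p.len ∧ p.acts i ∉ I) =
      subseq q.actSeq (fun i => (i : ℕ∞) < q.len ∧ q.acts i ∉ I)

/-- A finite run of length `n` along `Tr`: `σ 0 -α 0→ σ 1 -α 1→ ⋯ -α (n-1)→ σ n`. -/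
def FinRun {S A : Type*} (Tr : S → A → S → Prop) (n : ℕ) (σ : ℕ → S) (α : ℕ → A) : Prop :=
  ∀ i < n, Tr (σ i) (α i) (σ (i + 1))

/-- `a` is a key action in `s` w.r.t. the reduction function `r`: for all
`a₁, …, aₙ ∉ r s` and paths `s -a₁…aₙ→ s'`, the action `a` is enabled in `s'`. -/
def KeyAction {S A : Type*} (Tr : S → A → S → Prop) (r : S → Set A) (s : S) (a : A) : Prop :=
  ∀ (n : ℕ) (σ : ℕ → S) (α : ℕ → A), σ 0 = s → FinRun Tr n σ α →
    (∀ i < n, α i ∉ r s) → ∃ t, Tr (σ n) a t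

/-- Condition D0: if some action is enabled in `s`, then `r s` contains an enabled action. -/
def CondD0 {S A : Type*} (Tr : S → A → S → Prop) (r : S → Set A) (s : S) : Prop :=
  (∃ a t, Tr s a t) → ∃ a ∈ r s, ∃ t, Tr s a t

/-- Condition D1. -/
def CondD1 {S A : Type*} (Tr : S → A → S → Prop) (r : S → Set A) (s : S) : Prop :=
  ∀ a ∈ r s, ∀ (n : ℕ) (σ : ℕ → S) (α : ℕ → A) (sn' : S),
    σ 0 = s → FinRun Tr n σ α → (∀ i < n, α i ∉ r s) → Tr (σ n) a sn' →
    ∃ σ' : ℕ → S, Tr s a (σ' 0) ∧ FinRun Tr n σ' α ∧ σ' n = sn'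

/-- Condition D1' (strengthened D1): additionally, if `a` is invisible then
`sᵢ -a→ s'ᵢ` for every `1 ≤ i < n`. -/
def CondD1' {S A : Type*} (Tr : S → A → S → Prop) (I : Set A) (r : S → Set A) (s : S) : Prop :=
  ∀ a ∈ r s, ∀ (n : ℕ) (σ : ℕ → S) (α : ℕ → A) (sn' : S),
    σ 0 = s → FinRun Tr n σ α → (∀ i < n, α i ∉ r s) → Tr (σ n) a sn' →
    ∃ σ' : ℕ → S, Tr s a (σ' 0) ∧ FinRun Tr n σ' α ∧ σ' n = sn' ∧
      (a ∈ I → ∀ i, 1 ≤ i → i < n → Tr (σ i) a (σ' i))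

/-- Condition D2: every enabled action of `r s` is a key action in `s`. -/
def CondD2 {S A : Type*} (Tr : S → A → S → Prop) (r : S → Set A) (s : S) : Prop :=
  ∀ a ∈ r s, (∃ t, Tr s a t) → KeyAction Tr r s a

/-- Condition D2w: if some action is enabled in `s`, then `r s` contains a key action. -/
def CondD2w {S A : Type*} (Tr : S → A → S → Prop) (r : S → Set A) (s : S) : Prop :=
  (∃ a t, Tr s a t) → ∃ a ∈ r s, KeyAction Tr r s a

/-- Condition V: if `r s` contains an enabled visible action, it contains all visible
actions. -/
def CondV {S A : Type*} (Tr : S → A → S → Prop) (I : Set A) (r : S → Set A) (s : S) : Prop :=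
  (∃ a ∈ r s, a ∉ I ∧ ∃ t, Tr s a t) → ∀ a, a ∉ I → a ∈ r s

/-- Condition I: if an invisible action is enabled in `s`, then `r s` contains an
invisible key action. -/
def CondI {S A : Type*} (Tr : S → A → S → Prop) (I : Set A) (r : S → Set A) (s : S) : Prop :=
  (∃ a ∈ I, ∃ t, Tr s a t) → ∃ a ∈ r s, a ∈ I ∧ KeyAction Tr r s a

/-- The states of the reduced LSTS: the smallest set of states containing the initial
state `s0` and closed under transitions labelled with actions of the stubborn set. -/
inductive RedReach {S A : Type*} (Tr : S → A → S → Prop) (r : S → Set A) (s0 : S) : S → Prop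
  | refl : RedReach Tr r s0 s0
  | step {s a t} : RedReach Tr r s0 s → a ∈ r s → Tr s a t → RedReach Tr r s0 t

/-- The transition relation of the reduced LSTS. -/
def RedTr {S A : Type*} (Tr : S → A → S → Prop) (r : S → Set A) (s0 : S) :
    S → A → S → Prop :=
  fun s a t => RedReach Tr r s0 s ∧ a ∈ r s ∧ Tr s a t

/-- Condition L: for every visible action `a`, every cycle in the reduced LSTS
contains a state `s` with `a ∈ r s`. -/
def CondL {S A : Type*} (Tr : S → A → S → Prop) (I : Set A) (r : S → Set A) (s0 : S) : Prop :=
  ∀ a ∉ I, ∀ (n : ℕ) (σ : ℕ → S) (α : ℕ → A), 0 < n →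
    FinRun (RedTr Tr r s0) n σ α → σ n = σ 0 → ∃ i < n, a ∈ r (σ i)

/-- Condition C4: either `r s` consists of all actions, or `r s` contains precisely one
enabled action. -/
def CondC4 {S A : Type*} (Tr : S → A → S → Prop) (r : S → Set A) (s : S) : Prop :=
  r s = Set.univ ∨ ∃! a, a ∈ r s ∧ ∃ t, Tr s a t

/-- `I` is a set of invisible actions w.r.t. the labelling `L`. -/
def InvisibleSet {S A l : Type*} (Tr : S → A → S → Prop) (L : S → Set l) (I : Set A) : Prop :=
  ∀ a ∈ I, ∀ s t, Tr s a t → L s = L t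

/-- Reachability along `Tr`. -/
inductive Reach {S A : Type*} (Tr : S → A → S → Prop) (s0 : S) : S → Prop
  | refl : Reach Tr s0 s0
  | step {s a t} : Reach Tr s0 s → Tr s a t → Reach Tr s0 t

/-- Stutter-trace equivalence of two systems: for every initial path of the one there
is a stutter equivalent initial path of the other, and vice versa. -/
def StutterTraceEquiv {S₁ A₁ S₂ A₂ l : Type*} (Tr₁ : S₁ → A₁ → S₁ → Prop) (i₁ : S₁)
    (L₁ : S₁ → Set l) (Tr₂ : S₂ → A₂ → S₂ → Prop) (i₂ : S₂) (L₂ : S₂ → Set l) : Prop :=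
  (∀ p : TPath Tr₁, p.states 0 = i₁ →
      ∃ q : TPath Tr₂, q.states 0 = i₂ ∧ StutterEquiv L₁ L₂ p q) ∧
  (∀ q : TPath Tr₂, q.states 0 = i₂ →
      ∃ p : TPath Tr₁, p.states 0 = i₁ ∧ StutterEquiv L₁ L₂ p q)

/-- Weak-trace equivalence of two systems with the same set `I` of invisible actions. -/
def WeakTraceEquiv {S₁ S₂ A : Type*} (Tr₁ : S₁ → A → S₁ → Prop) (i₁ : S₁)
    (Tr₂ : S₂ → A → S₂ → Prop) (i₂ : S₂) (I : Set A) : Prop :=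
  (∀ p : TPath Tr₁, p.states 0 = i₁ → ∃ q : TPath Tr₂, q.states 0 = i₂ ∧ WeakEquiv I p q) ∧
  (∀ q : TPath Tr₂, q.states 0 = i₂ → ∃ p : TPath Tr₁, p.states 0 = i₁ ∧ WeakEquiv I p q)

/-- An LSTS is labelled consistently iff any two weakly equivalent paths starting in a
common state are stutter equivalent. -/
def LabelledConsistently {S A l : Type*} (Tr : S → A → S → Prop) (L : S → Set l)
    (I : Set A) : Prop :=
  ∀ p q : TPath Tr, p.states 0 = q.states 0 → WeakEquiv I p q → StutterEquiv L L p q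

/-- Label sequence of an explicitly given finite run with `n` transitions. -/
noncomputable def finLabelSeq {S l : Type*} (L : S → Set l) (n : ℕ) (σ : ℕ → S) :
    ℕ → Option (Set l) :=
  fun i => if i ≤ n then some (L (σ i)) else none

/-- Stutter equivalence of two explicitly given finite runs (with `n`, resp. `m`,
transitions); both are finite, so it only requires equality of no-stutter traces. -/
def FinStutterEquiv {S l : Type*} (L : S → Set l) (n : ℕ) (σ : ℕ → S) (m : ℕ)
    (τ : ℕ → S) : Prop :=
  nsTrace (finLabelSeq L n σ) = nsTrace (finLabelSeq L m τ)

/-- Stutter equivalence of two explicitly given infinite runs; both are infinite, so it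
only requires equality of no-stutter traces. -/
def InfStutterEquiv {S l : Type*} (L : S → Set l) (σ τ : ℕ → S) : Prop :=
  nsTrace (fun i => some (L (σ i))) = nsTrace (fun i => some (L (τ i)))

/-- A Petri net over places `P` and structural transitions `T`:
`pre p t = W(p,t)`, `post t p = W(t,p)`, and initial marking `m0`. -/
structure PetriNet (P T : Type*) where
  pre : P → T → ℕ
  post : T → P → ℕ
  m0 : P → ℕ

/-- The firing relation of a Petri net: `m -t→ m'` iff `W(p,t) ≤ m(p)` and
`m'(p) = m(p) - W(p,t) + W(t,p)` for all places `p`. -/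
def PetriNet.Fires {P T : Type*} (N : PetriNet P T) (m : P → ℕ) (t : T) (m' : P → ℕ) : Prop :=
  ∀ p, N.pre p t ≤ m p ∧ m' p = m p - N.pre p t + N.post t p

/-- Comparison operators `⋈ ∈ {<, ≤, >, ≥, =, ≠}`. -/
inductive Cmp : Type
  | lt | le | gt | ge | eq | ne

/-- Semantics of the comparison operators. -/
def Cmp.holds : Cmp → ℤ → ℤ → Prop
  | .lt, x, y => x < y
  | .le, x, y => x ≤ y
  | .gt, x, y => x > y
  | .ge, x, y => x ≥ y
  | .eq, x, y => x = y
  | .ne, x, y => x ≠ y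

/-- A linear proposition `k₁·p₁ + ⋯ + kₙ·pₙ ⋈ k`. -/
structure LinProp (P : Type*) where
  coef : P → ℤ
  cmp : Cmp
  const : ℤ

/-- The value of the linear left-hand side of a linear proposition in a marking. -/
def LinProp.value {P : Type*} [Fintype P] (q : LinProp P) (m : P → ℕ) : ℤ :=
  ∑ p, q.coef p * (m p : ℤ)

/-- Satisfaction of a linear proposition in a marking. -/
def LinProp.sat {P : Type*} [Fintype P] (q : LinProp P) (m : P → ℕ) : Prop :=
  q.cmp.holds (q.value m) q.const

/-- A polynomial proposition `f(p₁,…,pₙ) ⋈ k`. -/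
structure PolyProp (P : Type*) where
  poly : MvPolynomial P ℤ
  cmp : Cmp
  const : ℤ

/-- The value of the left-hand-side polynomial of a polynomial proposition in a marking. -/
noncomputable def PolyProp.value {P : Type*} (q : PolyProp P) (m : P → ℕ) : ℤ :=
  MvPolynomial.eval (fun p => (m p : ℤ)) q.poly

/-- Satisfaction of a polynomial proposition in a marking. -/
def PolyProp.sat {P : Type*} (q : PolyProp P) (m : P → ℕ) : Prop :=
  q.cmp.holds (q.value m) q.const

/-!
A structural transition adds a constant vector, its effect, to the marking. If it is value
invisible, then every polynomial in question is unchanged under translation by this effect at all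
markings enabling the transition; these contain a translated orthant, which is Zariski dense, so the
effect is a period of the polynomial on all of `ℤ^P`. Hence the class of the marking in the quotient
of `ℤ^P` by the common periods determines the label, is not changed by value invisible transitions,
and is changed by every transition in a way that depends only on the transition. The sequence of
these classes, up to stuttering, is therefore determined by its initial value and the visible
transitions.
-/

section Subsequence

variable {α : Type*} {P R : ℕ → Prop}

theorem exists_count_eq_iff [DecidablePred P] {k : ℕ} :
    (∃ i, P i ∧ Nat.count P i = k) ↔ {i | P i}.Infinite ∨ k < {i | P i}.ncard := by
  constructor
  · rintro ⟨i, hi, rfl⟩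
    refine or_iff_not_imp_left.2 fun hinf => ?_
    have hfin : {i | P i}.Finite := Set.not_infinite.1 hinf
    rw [Set.ncard_eq_toFinset_card _ hfin]
    exact Nat.count_lt_card hfin hi
  · intro hk
    have hlt : ∀ hfin : (Set.ofPred P).Finite, k < hfin.toFinset.card := fun hfin => by
      rw [← Set.ncard_eq_toFinset_card _ hfin]
      exact hk.resolve_left (Set.not_infinite.2 hfin)
    exact ⟨Nat.nth P k, Nat.nth_mem k hlt, Nat.count_nth hlt⟩

theorem subseq_count [DecidablePred P] (g : ℕ → Option α) {i : ℕ} (hi : P i) :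
    subseq g P (Nat.count P i) = g i := by
  rw [subseq, if_pos (exists_count_eq_iff.1 ⟨i, hi, rfl⟩), Nat.nth_count hi]

theorem subseq_eq_none [DecidablePred P] (g : ℕ → Option α) {k : ℕ}
    (hk : ¬∃ i, P i ∧ Nat.count P i = k) : subseq g P k = none :=
  if_neg (mt exists_count_eq_iff.2 hk)

theorem count_apply_eq_of_strictMonoOn [DecidablePred P] [DecidablePred R] {c : ℕ → ℕ}
    (hmono : StrictMonoOn c {i | P i}) (himage : c '' {i | P i} = {k | R k}) {i : ℕ} (hi : P i) :
    Nat.count R (c i) = Nat.count P i := by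
  have hfilter : (Finset.range (c i)).filter R = ((Finset.range i).filter P).image c := by
    ext k
    simp only [Finset.mem_filter, Finset.mem_range, Finset.mem_image]
    constructor
    · rintro ⟨hlt, hk⟩
      obtain ⟨j, hj, rfl⟩ := himage.ge hk
      exact ⟨j, ⟨(hmono.lt_iff_lt hj hi).1 hlt, hj⟩, rfl⟩
    · rintro ⟨j, ⟨hlt, hj⟩, rfl⟩
      exact ⟨hmono hj hi hlt, himage.le ⟨j, hj, rfl⟩⟩
  have hinj : Set.InjOn c ((Finset.range i).filter P) :=
    hmono.injOn.mono fun j hj => (Finset.mem_filter.1 hj).2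
  rw [Nat.count_eq_card_filter_range, Nat.count_eq_card_filter_range, hfilter,
    Finset.card_image_of_injOn hinj]

theorem subseq_eq_of_strictMonoOn {g h : ℕ → Option α} {c : ℕ → ℕ}
    (hmono : StrictMonoOn c {i | P i}) (himage : c '' {i | P i} = {k | R k})
    (hgh : ∀ i, P i → g i = h (c i)) : subseq g P = subseq h R := by
  have hmem {i : ℕ} (hi : P i) : R (c i) := himage.le ⟨i, hi, rfl⟩
  have hcount {i : ℕ} (hi : P i) := count_apply_eq_of_strictMonoOn hmono himage hi
  funext k
  by_cases hk : ∃ i, P i ∧ Nat.count P i = k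
  · obtain ⟨i, hi, rfl⟩ := hk
    rw [subseq_count g hi, ← hcount hi, subseq_count h (hmem hi), hgh i hi]
  · rw [subseq_eq_none g hk, subseq_eq_none]
    rintro ⟨j, hj, rfl⟩
    obtain ⟨i, hi, rfl⟩ := himage.ge hj
    exact hk ⟨i, hi, (hcount hi).symm⟩

end Subsequence

section Stuttering

variable {α β : Type*}

/-- `i` is the start of a maximal block of equal values of `g`; the no-stutter trace keeps exactly
these indices. -/
def IsBlockStart (g : ℕ → Option α) (i : ℕ) : Prop :=
  (g i).isSome ∧ (i = 0 ∨ g i ≠ g (i - 1))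

theorem isBlockStart_succ {g : ℕ → Option α} {i : ℕ} :
    IsBlockStart g (i + 1) ↔ (g (i + 1)).isSome ∧ g (i + 1) ≠ g i := by
  simp [IsBlockStart]

/-- The finite or infinite sequence `g` (`none` marking positions past its end) is obtained from `h`
by repeating entries: `c i` is the position in `h` of the `i`-th entry of `g`. Beyond the end of `g`
the values of `c` carry no information. -/
structure IsStretching (g h : ℕ → Option α) (c : ℕ → ℕ) : Prop where
  map_zero : c 0 = 0
  map_succ : ∀ i, c (i + 1) = c i ∨ c (i + 1) = c i + 1
  isSome_of_succ : ∀ i, (g (i + 1)).isSome → (g i).isSome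
  apply_eq : ∀ i, (g i).isSome → g i = h (c i)
  exists_index : ∀ k, (h k).isSome → ∃ i, (g i).isSome ∧ c i = k

namespace IsStretching

variable {g h : ℕ → Option α} {c : ℕ → ℕ}

theorem map (hc : IsStretching g h c) (f : α → β) :
    IsStretching (fun i => (g i).map f) (fun k => (h k).map f) c where
  map_zero := hc.map_zero
  map_succ := hc.map_succ
  isSome_of_succ := by simpa only [Option.isSome_map] using hc.isSome_of_succ
  apply_eq i hi := congrArg _ (hc.apply_eq i (by simpa only [Option.isSome_map] using hi))
  exists_index := by simpa only [Option.isSome_map] using hc.exists_index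

theorem monotone (hc : IsStretching g h c) : Monotone c :=
  monotone_nat_of_le_succ fun i => by have := hc.map_succ i; omega

theorem map_succ_of_isBlockStart (hc : IsStretching g h c) {i : ℕ}
    (hi : IsBlockStart g (i + 1)) : c (i + 1) = c i + 1 := by
  obtain ⟨hsome, hne⟩ := isBlockStart_succ.1 hi
  refine (hc.map_succ i).resolve_left fun heq => hne ?_
  rw [hc.apply_eq _ hsome, heq, hc.apply_eq i (hc.isSome_of_succ i hsome)]

theorem strictMonoOn (hc : IsStretching g h c) : StrictMonoOn c {i | IsBlockStart g i} := by
  rintro i - (_ | j) hj hij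
  · omega
  · have hle : c i ≤ c j := hc.monotone (Nat.lt_succ_iff.1 hij)
    have hsucc := hc.map_succ_of_isBlockStart hj
    omega

theorem isBlockStart_apply_iff (hc : IsStretching g h c) {i : ℕ} (hi : (g (i + 1)).isSome)
    (hsucc : c (i + 1) = c i + 1) : IsBlockStart h (c (i + 1)) ↔ IsBlockStart g (i + 1) := by
  rw [hsucc, isBlockStart_succ, isBlockStart_succ, ← hsucc, ← hc.apply_eq _ hi,
    ← hc.apply_eq i (hc.isSome_of_succ i hi)]

theorem isBlockStart_apply (hc : IsStretching g h c) {i : ℕ} (hi : IsBlockStart g i) :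
    IsBlockStart h (c i) := by
  cases i with
  | zero => exact ⟨hc.apply_eq 0 hi.1 ▸ hi.1, Or.inl hc.map_zero⟩
  | succ i => exact (hc.isBlockStart_apply_iff hi.1 (hc.map_succ_of_isBlockStart hi)).2 hi

theorem exists_isBlockStart (hc : IsStretching g h c) {k : ℕ} (hk : IsBlockStart h k) :
    ∃ i, IsBlockStart g i ∧ c i = k := by
  classical
  have hex := hc.exists_index k hk.1
  obtain ⟨hsome, hck⟩ := Nat.find_spec hex
  refine ⟨Nat.find hex, ?_, hck⟩
  cases hi : Nat.find hex with
  | zero => exact ⟨hi ▸ hsome, Or.inl rfl⟩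
  | succ i =>
    rw [hi] at hsome hck
    have hne : c i ≠ k := fun heq =>
      Nat.find_min hex (hi ▸ Nat.lt_succ_self i) ⟨hc.isSome_of_succ i hsome, heq⟩
    have hsucc : c (i + 1) = c i + 1 := (hc.map_succ i).resolve_left fun heq => hne (heq ▸ hck)
    exact (hc.isBlockStart_apply_iff hsome hsucc).1 (hck ▸ hk)

theorem nsTrace_eq (hc : IsStretching g h c) : nsTrace g = nsTrace h :=
  have himage : c '' {i | IsBlockStart g i} = {k | IsBlockStart h k} :=
    Set.Subset.antisymm (Set.image_subset_iff.2 fun _ => hc.isBlockStart_apply)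
      fun _ => hc.exists_isBlockStart
  subseq_eq_of_strictMonoOn hc.strictMonoOn himage fun i hi => hc.apply_eq i hi.1

end IsStretching

end Stuttering

section Abstraction

variable {S A V l : Type*} {Tr : S → A → S → Prop}

namespace TPath

/-- The `i`-th transition of the path exists and is visible, that is, labelled outside `I`. -/
def IsVisibleAt (p : TPath Tr) (I : Set A) (i : ℕ) : Prop :=
  (i : ℕ∞) < p.len ∧ p.acts i ∉ I

/-- The projection of the action sequence of a path onto the actions outside `I`, as compared in
weak equivalence. -/
noncomputable def visibleSeq (p : TPath Tr) (I : Set A) : ℕ → Option A :=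
  subseq p.actSeq (p.IsVisibleAt I)

/-- The images under `φ` of the states along a path (`none` beyond the end). -/
noncomputable def imageSeq (p : TPath Tr) (φ : S → V) : ℕ → Option V :=
  fun i => if (i : ℕ∞) ≤ p.len then some (φ (p.states i)) else none

theorem visibleSeq_count (p : TPath Tr) {I : Set A} {i : ℕ} (hi : p.IsVisibleAt I i) :
    p.visibleSeq I (Nat.count (p.IsVisibleAt I) i) = some (p.acts i) := by
  rw [visibleSeq, subseq_count _ hi, actSeq, if_pos hi.1]

theorem exists_count_eq_of_visibleSeq_isSome (p : TPath Tr) {I : Set A} {k : ℕ}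
    (hk : (p.visibleSeq I k).isSome) :
    ∃ i, p.IsVisibleAt I i ∧ Nat.count (p.IsVisibleAt I) i = k := by
  by_contra hnone
  rw [visibleSeq, subseq_eq_none _ hnone] at hk
  simp at hk

theorem imageSeq_isSome (p : TPath Tr) {φ : S → V} {i : ℕ} :
    (p.imageSeq φ i).isSome ↔ (i : ℕ∞) ≤ p.len := by
  simp [imageSeq]

theorem labelSeq_comp (p : TPath Tr) (φ : S → V) (label : V → Set l) :
    p.labelSeq (label ∘ φ) = fun i => (p.imageSeq φ i).map label := by
  funext i
  simp only [labelSeq, imageSeq, Function.comp_apply, apply_ite (Option.map label),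
    Option.map_some, Option.map_none]

end TPath

/-- The states visited by the deterministic dynamics `step` when it reads the finite or infinite
word `w` starting in `v` (`none` beyond the end of `w`). -/
def runWord (step : A → V → V) (v : V) (w : ℕ → Option A) : ℕ → Option V
  | 0 => some v
  | k + 1 => Option.map₂ step (w k) (runWord step v w k)

variable {I : Set A} {φ : S → V} {step : A → V → V}

theorem TPath.runWord_visibleSeq_count (hstep : ∀ s a t, Tr s a t → φ t = step a (φ s))
    (hinv : ∀ a ∈ I, ∀ s t, Tr s a t → φ t = φ s) (p : TPath Tr) {i : ℕ}
    (hi : (i : ℕ∞) ≤ p.len) :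
    runWord step (φ (p.states 0)) (p.visibleSeq I) (Nat.count (p.IsVisibleAt I) i) =
      some (φ (p.states i)) := by
  induction i with
  | zero => rw [Nat.count_zero, runWord]
  | succ i ih =>
    have hlt : (i : ℕ∞) < p.len := ENat.natCast_add_one_le_iff.1 hi
    have htr := p.valid i hlt
    by_cases hvis : p.IsVisibleAt I i
    · rw [Nat.count_succ, if_pos hvis, runWord, p.visibleSeq_count hvis, ih hlt.le,
        Option.map₂_some_some, hstep _ _ _ htr]
    · have hact : p.acts i ∈ I := not_not.1 fun hact => hvis ⟨hlt, hact⟩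
      rw [Nat.count_succ, if_neg hvis, add_zero, ih hlt.le, hinv _ hact _ _ htr]

theorem TPath.exists_count_eq_of_runWord_isSome (p : TPath Tr) {v : V} {k : ℕ}
    (hk : (runWord step v (p.visibleSeq I) k).isSome) :
    ∃ i : ℕ, (i : ℕ∞) ≤ p.len ∧ Nat.count (p.IsVisibleAt I) i = k := by
  cases k with
  | zero => exact ⟨0, zero_le, Nat.count_zero _⟩
  | succ k =>
    have hsome : (p.visibleSeq I k).isSome := by
      cases hw : p.visibleSeq I k with
      | none => simp [runWord, hw] at hk
      | some a => rfl
    obtain ⟨i, hvis, rfl⟩ := p.exists_count_eq_of_visibleSeq_isSome hsome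
    exact ⟨i + 1, ENat.natCast_add_one_le_iff.2 hvis.1, by rw [Nat.count_succ, if_pos hvis]⟩

theorem TPath.isStretching_imageSeq (hstep : ∀ s a t, Tr s a t → φ t = step a (φ s))
    (hinv : ∀ a ∈ I, ∀ s t, Tr s a t → φ t = φ s) (p : TPath Tr) :
    IsStretching (p.imageSeq φ) (runWord step (φ (p.states 0)) (p.visibleSeq I))
      (Nat.count (p.IsVisibleAt I)) where
  map_zero := Nat.count_zero _
  map_succ i := by rw [Nat.count_succ]; split_ifs <;> simp
  isSome_of_succ i hi := by
    rw [imageSeq_isSome] at hi ⊢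
    exact (ENat.natCast_add_one_le_iff.1 hi).le
  apply_eq i hi := by
    have hle := p.imageSeq_isSome.1 hi
    rw [imageSeq, if_pos hle, p.runWord_visibleSeq_count hstep hinv hle]
  exists_index k hk := by
    obtain ⟨i, hle, hcount⟩ := p.exists_count_eq_of_runWord_isSome hk
    exact ⟨i, p.imageSeq_isSome.2 hle, hcount⟩

theorem labelledConsistently_of_factorsThrough {L : S → Set l}
    (hstep : ∀ s a t, Tr s a t → φ t = step a (φ s))
    (hinv : ∀ a ∈ I, ∀ s t, Tr s a t → φ t = φ s) (hL : L.FactorsThrough φ) :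
    LabelledConsistently Tr L I := by
  rintro p q hinit ⟨hlen, hvis⟩
  obtain ⟨label, rfl⟩ := (Function.factorsThrough_iff L).1 hL
  have htrace (r : TPath Tr) := ((r.isStretching_imageSeq hstep hinv).map label).nsTrace_eq
  refine ⟨hlen, ?_⟩
  rw [p.labelSeq_comp, q.labelSeq_comp, htrace p, htrace q, hinit]
  change p.visibleSeq I = q.visibleSeq I at hvis
  rw [hvis]

end Abstraction

section Periods

open MvPolynomial

theorem periodic_eval_of_forall_mem_pi {σ R : Type*} [CommRing R] [IsDomain R]
    {f : MvPolynomial σ R} {d : σ → R} {s : σ → Set R} (hs : ∀ i, (s i).Infinite)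
    (h : ∀ x ∈ Set.univ.pi s, eval (x + d) f = eval x f) :
    Function.Periodic (fun x => eval x f) d := by
  have heval (x : σ → R) : eval x (bind₁ (fun i => X i + C (d i)) f) = eval (x + d) f := by
    rw [eval, eval₂Hom_bind₁]
    simp only [map_add, eval₂Hom_X', eval₂Hom_C, RingHom.id_apply]
    rfl
  have htranslate : bind₁ (fun i => X i + C (d i)) f = f :=
    funext_set s hs fun x hx => (heval x).trans (h x hx)
  intro x
  exact (heval x).symm.trans (congrArg (eval x) htranslate)

/-- The subgroup of the common periods of a family of functions. -/
def commonPeriods {G β : Type*} [AddGroup G] (F : Set (G → β)) : AddSubgroup G where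
  carrier := {d | ∀ f ∈ F, Function.Periodic f d}
  zero_mem' f _ x := by rw [add_zero]
  add_mem' hc hd f hf := (hc f hf).add_period (hd f hf)
  neg_mem' hd f hf := (hd f hf).neg

theorem eq_of_mk_commonPeriods_eq {G β : Type*} [AddGroup G] {F : Set (G → β)} {f : G → β}
    (hf : f ∈ F) {x y : G} (hxy : (x : G ⧸ commonPeriods F) = y) : f x = f y := by
  have hper : Function.Periodic f (-x + y) := QuotientAddGroup.eq.1 hxy f hf
  rw [← hper x, add_neg_cancel_left]

end Periods

section PetriNet

variable {P T : Type*}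

/-- A marking regarded as a point of `ℤ^P`, where the effects of transitions can be added. -/
def intMarking (m : P → ℕ) : P → ℤ :=
  fun p => m p

/-- The effect of a structural transition: the change `W(t,p) - W(p,t)` of each place `p`. -/
def PetriNet.effect (N : PetriNet P T) (t : T) : P → ℤ :=
  fun p => N.post t p - N.pre p t

theorem PetriNet.Fires.intMarking_eq {N : PetriNet P T} {m m' : P → ℕ} {t : T}
    (h : N.Fires m t m') : intMarking m' = intMarking m + N.effect t := by
  funext p
  obtain ⟨hle, heq⟩ := h p
  simp only [intMarking, effect, Pi.add_apply]
  omega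

theorem PetriNet.exists_fires_of_pre_le (N : PetriNet P T) {t : T} {x : P → ℤ}
    (hx : ∀ p, (N.pre p t : ℤ) ≤ x p) : ∃ m m', N.Fires m t m' ∧ intMarking m = x := by
  have hnonneg (p : P) : 0 ≤ x p := (Int.natCast_nonneg _).trans (hx p)
  refine ⟨fun p => (x p).toNat, _, fun p => ⟨(Int.le_toNat (hnonneg p)).2 (hx p), rfl⟩, ?_⟩
  exact funext fun p => Int.toNat_of_nonneg (hnonneg p)

/-- The functions on `ℤ^P` given by the left-hand sides of the polynomial propositions in `Q`. -/
def polyFunctions (Q : Set (PolyProp P)) : Set ((P → ℤ) → ℤ) :=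
  (fun q x => MvPolynomial.eval x q.poly) '' Q

/-- The structural transitions that are value invisible with respect to the polynomial propositions
in `Q`. -/
def PetriNet.valueInvisible (N : PetriNet P T) (Q : Set (PolyProp P)) : Set T :=
  {t : T | ∀ q ∈ Q, ∀ m m', N.Fires m t m' → q.value m = q.value m'}

theorem PetriNet.effect_mem_commonPeriods {N : PetriNet P T} {Q : Set (PolyProp P)} {t : T}
    (ht : t ∈ N.valueInvisible Q) : N.effect t ∈ commonPeriods (polyFunctions Q) := by
  rintro _ ⟨q, hq, rfl⟩
  refine periodic_eval_of_forall_mem_pi (fun p => Set.Ici_infinite (N.pre p t : ℤ)) ?_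
  intro x hx
  obtain ⟨m, m', hfire, rfl⟩ := N.exists_fires_of_pre_le fun p => hx p (Set.mem_univ p)
  rw [← hfire.intMarking_eq]
  exact (ht q hq m m' hfire).symm

/-- The class of a marking modulo the common periods of the left-hand sides of the polynomial
propositions in `Q`, an abstraction of the marking which still determines their truth values. -/
def markingClass (Q : Set (PolyProp P)) (m : P → ℕ) :
    (P → ℤ) ⧸ commonPeriods (polyFunctions Q) :=
  QuotientAddGroup.mk (intMarking m)

theorem factorsThrough_markingClass (Q : Set (PolyProp P)) :
    Function.FactorsThrough (fun m => {q ∈ Q | q.sat m}) (markingClass Q) := by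
  intro m m' hmm'
  ext q
  refine and_congr_right fun hq => ?_
  have hvalue : q.value m = q.value m' :=
    eq_of_mk_commonPeriods_eq (f := fun x => MvPolynomial.eval x q.poly)
      (Set.mem_image_of_mem _ hq) hmm'
  rw [PolyProp.sat, PolyProp.sat, hvalue]

theorem PetriNet.Fires.markingClass_eq {N : PetriNet P T} (Q : Set (PolyProp P)) {m m' : P → ℕ}
    {t : T} (h : N.Fires m t m') : markingClass Q m' = markingClass Q m + N.effect t := by
  rw [markingClass, markingClass, h.intMarking_eq, QuotientAddGroup.mk_add]

theorem PetriNet.Fires.markingClass_eq_of_mem_valueInvisible {N : PetriNet P T}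
    {Q : Set (PolyProp P)} {m m' : P → ℕ} {t : T} (h : N.Fires m t m')
    (ht : t ∈ N.valueInvisible Q) : markingClass Q m' = markingClass Q m := by
  rw [h.markingClass_eq, (QuotientAddGroup.eq_zero_iff _).2 (effect_mem_commonPeriods ht),
    add_zero]

theorem petri_value_invisibility_consistent_for_polynomial_general (N : PetriNet P T)
    (Q : Set (PolyProp P)) :
    LabelledConsistently N.Fires (fun m => {q ∈ Q | q.sat m}) (N.valueInvisible Q) :=
  labelledConsistently_of_factorsThrough
    (step := fun t v => v + (N.effect t : (P → ℤ) ⧸ commonPeriods (polyFunctions Q)))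
    (fun _ _ _ h => h.markingClass_eq Q)
    (fun _ ht _ _ h => h.markingClass_eq_of_mem_valueInvisible ht)
    (factorsThrough_markingClass Q)

end PetriNet

/-- Under value invisibility, the LSTS underlying a Petri net is labelled
consistently for polynomial propositions: paths starting in a common marking that are
weakly equivalent w.r.t. the set of value invisible structural transitions are stutter
equivalent under the labelling by polynomial propositions. -/
theorem petri_value_invisibility_consistent_for_polynomial {P T : Type*}
    [Fintype P] [Fintype T] (N : PetriNet P T) (Q : Set (PolyProp P)) :
    ∀ p q : TPath N.Fires,
      p.states 0 = q.states 0 →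
      WeakEquiv {t : T | ∀ qp ∈ Q, ∀ m m', N.Fires m t m' →
          PolyProp.value qp m = PolyProp.value qp m'} p q →
      StutterEquiv (fun m => {qp ∈ Q | qp.sat m}) (fun m => {qp ∈ Q | qp.sat m})
        p q :=
  petri_value_invisibility_consistent_for_polynomial_general N Q
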